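/- For all t > 0, r ∈ (0,π/2), η ∈ (0,π), the double series defining p_t(r,η) converges, is smooth in (t,r,η), and satisfies the heat equation ∂p/∂t = ∂²p/∂r² + (7·cot r − 7·tan r)·∂p/∂r + tan²r·(∂²p/∂η² + 6·cot η·∂p/∂η). -/

import Mathlib

open Real MeasureTheory Filter Topology

/-- Jacobi polynomial `P_k^{3,b}` (with `b = m+3` octonionic, `b = m+1` quaternionic),
given by the polynomial extension of the Rodrigues formula. -/
noncomputable def jacP (k b : ℕ) : Polynomial ℝ :=
  Polynomial.C ((-1 : ℝ) ^ k / (2 ^ k * (Nat.factorial k : ℝ))) *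
    (Polynomial.derivative^[k]
        ((1 - Polynomial.X) ^ (k + 3) * (1 + Polynomial.X) ^ (b + k)) /
      ((1 - Polynomial.X) ^ 3 * (1 + Polynomial.X) ^ b))

/-- Normalized eigenfunction `h_m` of the radial Laplacian on `S^7`. -/
noncomputable def hOct (m : ℕ) (η : ℝ) : ℝ :=
  (Real.Gamma (7 / 2) / (Real.sqrt π * Real.Gamma 3)) *
    ∫ φ in (0 : ℝ)..π,
      (((Real.cos η : ℂ) + Complex.I * ((Real.sin η * Real.cos φ : ℝ) : ℂ)) ^ m).re *
        (Real.sin φ) ^ 5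

/-- Coefficient `α_{k,m}`. -/
noncomputable def alphOct (k m : ℕ) : ℝ :=
  (96 / π ^ 8) * (m + 3) * (2 * k + m + 7) *
    (Nat.choose (k + m + 6) (k + m + 3)) * (Nat.choose (m + 5) m)

/-- Subelliptic heat kernel of the octonionic Hopf fibration, in cylindric coordinates. -/
noncomputable def pOct (t r η : ℝ) : ℝ :=
  ∑' m : ℕ, ∑' k : ℕ,
    alphOct k m * hOct m η * Real.exp (-(4 * ((k * (k + m + 7) + 2 * m : ℕ) : ℝ)) * t) *
      (Real.cos r) ^ m * (jacP k (m + 3)).eval (Real.cos (2 * r))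

/-- Coefficient `β_{k,m}` of the quaternionic heat kernel. -/
noncomputable def betQ (k m : ℕ) : ℝ :=
  (Real.Gamma 4 / (2 * π ^ 6)) * (2 * k + m + 5) * (m + 1) *
    (Nat.choose (k + m + 4) (k + m + 1))

/-- Subelliptic heat kernel of the quaternionic Hopf fibration on `S^11`. -/
noncomputable def pQuat (t r η : ℝ) : ℝ :=
  ∑' m : ℕ, ∑' k : ℕ,
    betQ k m * Real.exp (-(4 * ((k * (k + m + 5) + 2 * m : ℕ) : ℝ)) * t) *
      (Real.sin ((m + 1) * η) / Real.sin η) *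
      (Real.cos r) ^ m * (jacP k (m + 1)).eval (Real.cos (2 * r))

/-- Gegenbauer polynomial `C_m^5` (polynomial extension to all real `x`). -/
noncomputable def geg5 (m : ℕ) (x : ℝ) : ℝ :=
  ∑ j ∈ Finset.range (m / 2 + 1),
    (-1 : ℝ) ^ j * (Nat.factorial (m - j + 4)) /
      ((Nat.factorial 4) * (Nat.factorial j) * (Nat.factorial (m - 2 * j))) * (2 * x) ^ (m - 2 * j)

/-- Radial heat kernel of the round sphere `S^11`, as a function of `cos δ`. -/
noncomputable def qS11 (t x : ℝ) : ℝ :=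
  (Real.Gamma 5 / (2 * π ^ 6)) *
    ∑' m : ℕ, (m + 5) * Real.exp (-((m * (m + 10) : ℕ) : ℝ) * t) * geg5 m x

/-- The kernel `g_t(η,y)` appearing in the integral representation. -/
noncomputable def gInt (t η y : ℝ) : ℝ :=
  (Real.sin η)⁻¹ ^ 3 *
    (Real.cos (η * y / (2 * t)) * (2 * y) * (η - 3 * t * Real.cot η) +
      Real.sin (η * y / (2 * t)) *
        (8 * t ^ 2 * Real.cot η ^ 2 + 4 * t ^ 2 * ((Real.sin η)⁻¹) ^ 2 -
          6 * t * η * Real.cot η + 2 * t + η ^ 2 - y ^ 2))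

/-- Theta-type function `V(t,δ)`. -/
noncomputable def Vtheta (t δ : ℝ) : ℝ :=
  (1 / Real.sqrt (4 * π * t)) * ∑' k : ℤ, Real.exp (-(δ - 2 * k * π) ^ 2 / (4 * t))

/-- The operator `f ↦ -(1/(2π sin δ)) f'`. -/
noncomputable def Dop (f : ℝ → ℝ) : ℝ → ℝ :=
  fun δ => -(1 / (2 * π * Real.sin δ)) * deriv f δ

/-! On `S⁷` Laplace's formula writes `h_m` as an average of `m`-th powers of curves
`cos η + i c sin η` in the unit disc, so every derivative satisfies `|h_m⁽ⁿ⁾| ≤ M mⁿ`; the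
Gegenbauer operator maps the integrand to a total derivative in `φ`, which gives the eigenvalue
equation. Rodrigues' formula turns a second-order equation for the weight `(1 - x)ᵃ (1 + x)ᵇ` into
Jacobi's equation, and expands `cosᵐ r · P_k(cos 2r)` into monomials of degree `m + 2k` in `sin r`
and `cos r`, whose coefficients add up in absolute value to `binom(2k + m + 6, k)` by
Vandermonde's identity. Products, sums and integrals preserve Bernstein bounds `‖Dⁿf‖ ≤ M Nⁿ`, so
`n` derivatives of a mode cost only a factor `Λⁿ` in the eigenvalue `Λ = 4(k(k + m + 7) + 2m)`,
which `e^{-Λt}` absorbs together with `α_{k,m}` and the binomial, itself at most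
`t^{-k} exp(k(2k + m + 6)t)`. The series may therefore be differentiated term by term, and each
mode solves the equation because conjugating Jacobi's equation by `cosᵐ r` produces exactly the
potential `m(m + 6) tan² r` that the spherical part cancels.
-/

open scoped ContDiff

section BernsteinBounds

variable {E F G A ι : Type*}
  [NormedAddCommGroup E] [NormedSpace ℝ E] [NormedAddCommGroup F] [NormedSpace ℝ F]
  [NormedAddCommGroup G] [NormedSpace ℝ G] [NormedRing A] [NormedAlgebra ℝ A]

/-- A smooth function obeying Bernstein's inequality `‖Dⁿf‖ ≤ M Nⁿ` on `s` for every order `n`: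
on `s` it behaves like a function of exponential type `N`. Smoothness is required everywhere,
so that `Dⁿf` may be taken to be the unrestricted `iteratedFDeriv`. -/
structure HasBernsteinBoundOn (f : E → F) (s : Set E) (N M : ℝ) : Prop where
  contDiff : ContDiff ℝ ∞ f
  norm_iteratedFDeriv_le : ∀ n, ∀ x ∈ s, ‖iteratedFDeriv ℝ n f x‖ ≤ M * N ^ n

namespace HasBernsteinBoundOn

variable {f : E → F} {s : Set E} {N N' M M' : ℝ}

theorem of_iteratedDeriv {f : ℝ → F} {s : Set ℝ} (hf : ContDiff ℝ ∞ f)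
    (h : ∀ n, ∀ x ∈ s, ‖iteratedDeriv n f x‖ ≤ M * N ^ n) : HasBernsteinBoundOn f s N M :=
  ⟨hf, fun n x hx => norm_iteratedFDeriv_eq_norm_iteratedDeriv.trans_le (h n x hx)⟩

theorem norm_iteratedDeriv_le {f : ℝ → F} {s : Set ℝ} (hf : HasBernsteinBoundOn f s N M)
    (n : ℕ) {x : ℝ} (hx : x ∈ s) : ‖iteratedDeriv n f x‖ ≤ M * N ^ n :=
  norm_iteratedFDeriv_eq_norm_iteratedDeriv.symm.trans_le (hf.norm_iteratedFDeriv_le n x hx)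

theorem norm_le (hf : HasBernsteinBoundOn f s N M) {x : E} (hx : x ∈ s) : ‖f x‖ ≤ M := by
  simpa using hf.norm_iteratedFDeriv_le 0 x hx

theorem mono_set {t : Set E} (hf : HasBernsteinBoundOn f s N M) (ht : t ⊆ s) :
    HasBernsteinBoundOn f t N M :=
  ⟨hf.contDiff, fun n x hx => hf.norm_iteratedFDeriv_le n x (ht hx)⟩

theorem mono_exponent (hf : HasBernsteinBoundOn f s N M) (hN : 0 ≤ N) (hNN' : N ≤ N') :
    HasBernsteinBoundOn f s N' M where
  contDiff := hf.contDiff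
  norm_iteratedFDeriv_le n x hx := by
    have hM : 0 ≤ M := (norm_nonneg _).trans (hf.norm_le hx)
    grw [hf.norm_iteratedFDeriv_le n x hx, hNN']

theorem mono_constant (hf : HasBernsteinBoundOn f s N M) (hN : 0 ≤ N) (hMM' : M ≤ M') :
    HasBernsteinBoundOn f s N M' :=
  ⟨hf.contDiff, fun n x hx => (hf.norm_iteratedFDeriv_le n x hx).trans (by gcongr)⟩

theorem const (c : F) : HasBernsteinBoundOn (fun _ : E => c) s 0 ‖c‖ where
  contDiff := contDiff_const
  norm_iteratedFDeriv_le n x _ := by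
    rcases eq_or_ne n 0 with rfl | hn
    · simp
    · simp [iteratedFDeriv_const_of_ne hn, hn]

theorem mul {f g : E → A} (hf : HasBernsteinBoundOn f s N M)
    (hg : HasBernsteinBoundOn g s N' M') :
    HasBernsteinBoundOn (fun x => f x * g x) s (N + N') (M * M') where
  contDiff := hf.contDiff.mul hg.contDiff
  norm_iteratedFDeriv_le n x hx := by
    refine (norm_iteratedFDeriv_mul_le hf.contDiff hg.contDiff x (mod_cast le_top)).trans ?_
    rw [add_pow, Finset.mul_sum]
    refine Finset.sum_le_sum fun i _ => ?_
    have hfi := hf.norm_iteratedFDeriv_le i x hx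
    have hgi := hg.norm_iteratedFDeriv_le (n - i) x hx
    calc (n.choose i : ℝ) * ‖iteratedFDeriv ℝ i f x‖ * ‖iteratedFDeriv ℝ (n - i) g x‖
        ≤ n.choose i * (M * N ^ i) * (M' * N' ^ (n - i)) :=
          mul_le_mul (by gcongr) hgi (norm_nonneg _)
            (mul_nonneg (Nat.cast_nonneg _) ((norm_nonneg _).trans hfi))
      _ = M * M' * (N ^ i * N' ^ (n - i) * n.choose i) := by ring

theorem const_mul {f : E → A} (hf : HasBernsteinBoundOn f s N M) (c : A) :
    HasBernsteinBoundOn (fun x => c * f x) s N (‖c‖ * M) := by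
  simpa using (const c).mul hf

theorem pow [NormOneClass A] {f : E → A} (hf : HasBernsteinBoundOn f s N M) (k : ℕ) :
    HasBernsteinBoundOn (fun x => f x ^ k) s (k * N) (M ^ k) := by
  induction k with
  | zero => simpa using const (E := E) (s := s) (1 : A)
  | succ k ih => simpa [pow_succ, add_mul] using ih.mul hf

theorem sum {f : ι → E → F} {M : ι → ℝ} {t : Finset ι}
    (hf : ∀ i ∈ t, HasBernsteinBoundOn (f i) s N (M i)) :
    HasBernsteinBoundOn (fun x => ∑ i ∈ t, f i x) s N (∑ i ∈ t, M i) where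
  contDiff := ContDiff.sum fun i hi => (hf i hi).contDiff
  norm_iteratedFDeriv_le n x hx := by
    rw [iteratedFDeriv_sum fun i hi => (hf i hi).contDiff.of_le (mod_cast le_top),
      Finset.sum_apply, Finset.sum_mul]
    exact norm_sum_le_of_le _ fun i hi => (hf i hi).norm_iteratedFDeriv_le n x hx

theorem comp_clm (hf : HasBernsteinBoundOn f s N M) (L : G →L[ℝ] E) (hL : ‖L‖ ≤ 1) :
    HasBernsteinBoundOn (fun x => f (L x)) (L ⁻¹' s) N M where
  contDiff := hf.contDiff.comp L.contDiff
  norm_iteratedFDeriv_le n x hx := by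
    have hcomp := L.iteratedFDeriv_comp_right hf.contDiff x (i := n) (mod_cast le_top)
    calc ‖iteratedFDeriv ℝ n (f ∘ L) x‖
        ≤ ‖iteratedFDeriv ℝ n f (L x)‖ * ∏ _i : Fin n, ‖L‖ :=
          hcomp ▸ ContinuousMultilinearMap.norm_compContinuousLinearMap_le _ _
      _ ≤ ‖iteratedFDeriv ℝ n f (L x)‖ :=
          mul_le_of_le_one_right (norm_nonneg _) (Finset.prod_le_one (by simp) (by simp [hL]))
      _ ≤ M * N ^ n := hf.norm_iteratedFDeriv_le n (L x) hx

theorem clm_comp (hf : HasBernsteinBoundOn f s N M) (L : F →L[ℝ] G) :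
    HasBernsteinBoundOn (fun x => L (f x)) s N (‖L‖ * M) where
  contDiff := L.contDiff.comp hf.contDiff
  norm_iteratedFDeriv_le n x hx := by
    refine (L.norm_iteratedFDeriv_comp_left hf.contDiff.contDiffAt (mod_cast le_top)).trans ?_
    grw [hf.norm_iteratedFDeriv_le n x hx, mul_assoc]

theorem fderiv (hf : HasBernsteinBoundOn f s N M) :
    HasBernsteinBoundOn (fderiv ℝ f) s N (M * N) where
  contDiff := hf.contDiff.fderiv_right le_rfl
  norm_iteratedFDeriv_le n x hx := by
    rw [norm_iteratedFDeriv_fderiv, mul_assoc, ← pow_succ']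
    exact hf.norm_iteratedFDeriv_le (n + 1) x hx

theorem deriv {f : ℝ → F} {s : Set ℝ} (hf : HasBernsteinBoundOn f s N M) :
    HasBernsteinBoundOn (deriv f) s N (M * N) :=
  of_iteratedDeriv (contDiff_infty_iff_deriv.1 hf.contDiff).2 fun n x hx => by
    rw [← iteratedDeriv_succ', mul_assoc, ← pow_succ']
    exact hf.norm_iteratedDeriv_le (n + 1) hx

theorem cos {s : Set ℝ} : HasBernsteinBoundOn Real.cos s 1 1 :=
  of_iteratedDeriv contDiff_cos fun n x _ => by simpa using abs_iteratedDeriv_cos_le_one n x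

theorem sin {s : Set ℝ} : HasBernsteinBoundOn Real.sin s 1 1 :=
  of_iteratedDeriv contDiff_sin fun n x _ => by simpa using abs_iteratedDeriv_sin_le_one n x

theorem exp_neg_mul {Λ : ℝ} (hΛ : 0 ≤ Λ) (t₀ : ℝ) :
    HasBernsteinBoundOn (fun t => exp (-Λ * t)) (Set.Ioi t₀) Λ (exp (-Λ * t₀)) :=
  of_iteratedDeriv (by fun_prop) fun n t ht => by
    have hexp : exp (-Λ * t) ≤ exp (-Λ * t₀) := by
      rw [exp_le_exp, neg_mul, neg_mul, neg_le_neg_iff]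
      exact mul_le_mul_of_nonneg_left (Set.mem_Ioi.1 ht).le hΛ
    rw [iteratedDeriv_exp_const_mul, norm_mul, norm_pow, norm_neg, norm_of_nonneg hΛ,
      norm_of_nonneg (exp_pos _).le, mul_comm]
    gcongr

end HasBernsteinBoundOn

end BernsteinBounds

section TermwiseDifferentiation

universe u

variable {E F : Type*} [NormedAddCommGroup E] [NormedSpace ℝ E]
  [NormedAddCommGroup F] [NormedSpace ℝ F] [CompleteSpace F]
  {ι : Type*} {N M : ι → ℝ}

theorem hasFDerivAt_tsum_of_hasBernsteinBoundOn {f : ι → E → F} {s : Set E} (hs : IsOpen s)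
    (hf : ∀ i, HasBernsteinBoundOn (f i) s (N i) (M i))
    (hM : ∀ n, Summable fun i => M i * N i ^ n) {x : E} (hx : x ∈ s) :
    HasFDerivAt (fun y => ∑' i, f i y) (∑' i, fderiv ℝ (f i) x) x := by
  obtain ⟨ε, hε, hball⟩ := Metric.isOpen_iff.1 hs x hx
  have hxε := Metric.mem_ball_self (x := x) hε
  exact hasFDerivAt_tsum_of_isPreconnected (by simpa using hM 1) Metric.isOpen_ball
    (convex_ball x ε).isPreconnected
    (fun i y _ => ((hf i).contDiff.differentiable (by simp)).differentiableAt.hasFDerivAt)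
    (fun i y hy => (hf i).fderiv.norm_le (hball hy)) hxε
    (.of_norm_bounded (by simpa using hM 0) fun i => (hf i).norm_le hx) hxε

theorem contDiffOn_tsum_of_hasBernsteinBoundOn {E F : Type u} [NormedAddCommGroup E]
    [NormedSpace ℝ E] [NormedAddCommGroup F] [NormedSpace ℝ F] [CompleteSpace F]
    {f : ι → E → F} {s : Set E} (hs : IsOpen s)
    (hf : ∀ i, HasBernsteinBoundOn (f i) s (N i) (M i))
    (hM : ∀ n, Summable fun i => M i * N i ^ n) :
    ContDiffOn ℝ ∞ (fun x => ∑' i, f i x) s := by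
  refine contDiffOn_infty.2 fun n => ?_
  induction n generalizing F f M with
  | zero =>
    exact contDiffOn_zero.2 fun x hx => (hasFDerivAt_tsum_of_hasBernsteinBoundOn hs hf hM
      hx).continuousAt.continuousWithinAt
  | succ n ih =>
    have hfderiv := fun x (hx : x ∈ s) => hasFDerivAt_tsum_of_hasBernsteinBoundOn hs hf hM hx
    push_cast
    refine (contDiffOn_succ_iff_fderiv_of_isOpen hs).2
      ⟨fun x hx => (hfderiv x hx).differentiableAt.differentiableWithinAt, by simp, ?_⟩
    refine (ih (fun i => (hf i).fderiv)
      fun n => by simpa [mul_assoc, ← pow_succ'] using hM (n + 1)).congr ?_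
    exact fun x hx => (hfderiv x hx).fderiv

theorem hasSum_iteratedDeriv_of_hasBernsteinBoundOn {f : ι → ℝ → F} {s : Set ℝ} (hs : IsOpen s)
    (hf : ∀ i, HasBernsteinBoundOn (f i) s (N i) (M i))
    (hM : ∀ n, Summable fun i => M i * N i ^ n) (n : ℕ) {x : ℝ} (hx : x ∈ s) :
    HasSum (fun i => iteratedDeriv n (f i) x) (iteratedDeriv n (fun y => ∑' i, f i y) x) := by
  induction n generalizing f M x with
  | zero =>
    simpa using (Summable.of_norm_bounded (by simpa using hM 0) fun i => (hf i).norm_le hx).hasSum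
  | succ n ih =>
    have hderiv : s.EqOn (deriv fun y => ∑' i, f i y) fun y => ∑' i, deriv (f i) y := by
      intro y hy
      have hsum : Summable fun i => fderiv ℝ (f i) y :=
        .of_norm_bounded (by simpa using hM 1) fun i => (hf i).fderiv.norm_le hy
      rw [(hasFDerivAt_tsum_of_hasBernsteinBoundOn hs hf hM hy).hasDerivAt.deriv]
      exact (ContinuousLinearMap.apply ℝ F (1 : ℝ)).map_tsum hsum
    simp only [iteratedDeriv_succ']
    rw [(hderiv.iteratedDeriv_of_isOpen hs n) hx]
    exact ih (fun i => (hf i).deriv)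
      (fun n => by simpa [mul_assoc, ← pow_succ'] using hM (n + 1)) hx

end TermwiseDifferentiation

section HeatExpansions

variable {ι : Type*} {Λ A B : ι → ℝ} {g h : ι → ℝ → ℝ} {t r η : ℝ}

theorem summable_mul_exp_neg_mul_pow {c : ι → ℝ} (hΛ : ∀ i, 0 ≤ Λ i)
    (hc : ∀ t > 0, Summable fun i => c i * exp (-Λ i * t)) (ht : 0 < t) (n : ℕ) :
    Summable fun i => c i * exp (-Λ i * t) * Λ i ^ n := by
  refine .of_norm_bounded ((hc (t / 2) (half_pos ht)).norm.mul_left (n.factorial * (2 / t) ^ n))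
    fun i => ?_
  have hpow : Λ i ^ n ≤ n.factorial * (2 / t) ^ n * exp (Λ i * (t / 2)) := by
    have h := pow_div_factorial_le_exp (x := Λ i * (t / 2)) (by have := hΛ i; positivity) n
    rw [div_le_iff₀' (by positivity)] at h
    calc Λ i ^ n = (2 / t) ^ n * (Λ i * (t / 2)) ^ n := by
          rw [← mul_pow]; congr 1; field_simp
      _ ≤ (2 / t) ^ n * (n.factorial * exp (Λ i * (t / 2))) := by gcongr
      _ = _ := by ring
  have hsplit : exp (-Λ i * t) * exp (Λ i * (t / 2)) = exp (-Λ i * (t / 2)) := by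
    rw [← exp_add]; ring_nf
  rw [norm_mul, norm_mul, norm_mul, norm_of_nonneg (pow_nonneg (hΛ i) n),
    norm_of_nonneg (exp_pos _).le, norm_of_nonneg (exp_pos _).le, ← hsplit]
  grw [hpow]
  exact le_of_eq (by ring)

/-- The data of a separated heat expansion `∑ᵢ e^{-Λᵢ t} gᵢ(r) hᵢ(η)`: nonnegative eigenvalues
`Λᵢ` and factors `gᵢ`, `hᵢ` of exponential type at most `Λᵢ`, whose Bernstein constants `Aᵢ`,
`Bᵢ` have products that are summable against the heat factor at every positive time. -/
structure IsHeatExpansion (Λ : ι → ℝ) (g h : ι → ℝ → ℝ) (A B : ι → ℝ) : Prop where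
  eigenvalue_nonneg : ∀ i, 0 ≤ Λ i
  radial_bound : ∀ i, HasBernsteinBoundOn (g i) Set.univ (Λ i) (A i)
  angular_bound : ∀ i, HasBernsteinBoundOn (h i) Set.univ (Λ i) (B i)
  summable_constants : ∀ t > 0, Summable fun i => A i * B i * exp (-Λ i * t)

namespace IsHeatExpansion

theorem hasBernsteinBoundOn_mode (hE : IsHeatExpansion Λ g h A B) (t₀ : ℝ) (i : ι) :
    HasBernsteinBoundOn (fun x : ℝ × ℝ × ℝ => exp (-Λ i * x.1) * g i x.2.1 * h i x.2.2)
      {x | t₀ < x.1} (3 * Λ i) (A i * B i * exp (-Λ i * t₀)) := by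
  have htime := (HasBernsteinBoundOn.exp_neg_mul (hE.eigenvalue_nonneg i) t₀).comp_clm
    (.fst ℝ ℝ (ℝ × ℝ)) (ContinuousLinearMap.norm_fst_le ..)
  have hsnd : ‖ContinuousLinearMap.snd ℝ ℝ (ℝ × ℝ)‖ ≤ 1 := ContinuousLinearMap.norm_snd_le ..
  have hradial := ((hE.radial_bound i).comp_clm (.fst ℝ ℝ ℝ)
    (ContinuousLinearMap.norm_fst_le ..)).comp_clm (.snd ℝ ℝ (ℝ × ℝ)) hsnd
  have hangular := ((hE.angular_bound i).comp_clm (.snd ℝ ℝ ℝ)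
    (ContinuousLinearMap.norm_snd_le ..)).comp_clm (.snd ℝ ℝ (ℝ × ℝ)) hsnd
  convert! (htime.mul (hradial.mono_set (Set.subset_univ _))).mul
    (hangular.mono_set (Set.subset_univ _)) using 1 <;> ring

theorem summable_mul_pow (hE : IsHeatExpansion Λ g h A B) (ht : 0 < t) (n : ℕ) :
    Summable fun i => A i * B i * exp (-Λ i * t) * Λ i ^ n :=
  summable_mul_exp_neg_mul_pow hE.eigenvalue_nonneg hE.summable_constants ht n

theorem contDiffOn (hE : IsHeatExpansion Λ g h A B) :
    ContDiffOn ℝ ∞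
      (fun x : ℝ × ℝ × ℝ => ∑' i, exp (-Λ i * x.1) * g i x.2.1 * h i x.2.2) {x | 0 < x.1} := by
  intro x (hx : 0 < x.1)
  have hopen : IsOpen {y : ℝ × ℝ × ℝ | x.1 / 2 < y.1} := isOpen_lt continuous_const continuous_fst
  refine ((contDiffOn_tsum_of_hasBernsteinBoundOn hopen
    (hE.hasBernsteinBoundOn_mode (x.1 / 2)) fun n => ?_).contDiffAt
      (hopen.mem_nhds (half_lt_self hx))).contDiffWithinAt
  simpa only [mul_pow, mul_left_comm] using
    (hE.summable_mul_pow (half_pos hx) n).mul_left (3 ^ n)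

theorem summable (hE : IsHeatExpansion Λ g h A B) (ht : 0 < t) (r η : ℝ) :
    Summable fun i => exp (-Λ i * t) * g i r * h i η :=
  .of_norm_bounded (hE.summable_constants (t / 2) (half_pos ht)) fun i =>
    (hE.hasBernsteinBoundOn_mode (t / 2) i).norm_le (x := (t, r, η)) (half_lt_self ht)

theorem swap (hE : IsHeatExpansion Λ g h A B) : IsHeatExpansion Λ h g B A :=
  ⟨hE.eigenvalue_nonneg, hE.angular_bound, hE.radial_bound,
    by simpa only [mul_comm (B _)] using hE.summable_constants⟩

theorem norm_mul_le (hE : IsHeatExpansion Λ g h A B) (i : ι) (r η : ℝ) :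
    ‖g i r * h i η‖ ≤ A i * B i :=
  norm_mul_le_of_le ((hE.radial_bound i).norm_le trivial) ((hE.angular_bound i).norm_le trivial)

theorem hasSum_deriv_time (hE : IsHeatExpansion Λ g h A B) (ht : 0 < t) (r η : ℝ) :
    HasSum (fun i => -Λ i * (exp (-Λ i * t) * g i r * h i η))
      (deriv (fun s => ∑' i, exp (-Λ i * s) * g i r * h i η) t) := by
  have hbound (i) : HasBernsteinBoundOn (fun s => exp (-Λ i * s) * g i r * h i η)
      (Set.Ioi (t / 2)) (Λ i) (A i * B i * exp (-Λ i * (t / 2))) := by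
    have hΛ := hE.eigenvalue_nonneg i
    simpa only [mul_assoc, mul_comm, mul_left_comm] using
      ((HasBernsteinBoundOn.exp_neg_mul hΛ (t / 2)).const_mul (g i r * h i η)).mono_constant hΛ
        (mul_le_mul_of_nonneg_right (hE.norm_mul_le i r η) (exp_pos _).le)
  have hderiv (i) : deriv (fun s => exp (-Λ i * s) * g i r * h i η) t
      = -Λ i * (exp (-Λ i * t) * g i r * h i η) := by
    have hexp : HasDerivAt (fun s => exp (-Λ i * s)) (exp (-Λ i * t) * -Λ i) t := by
      simpa using ((hasDerivAt_id t).const_mul (-Λ i)).exp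
    rw [((hexp.mul_const (g i r)).mul_const (h i η)).deriv]
    ring
  simpa only [iteratedDeriv_one, hderiv] using
    hasSum_iteratedDeriv_of_hasBernsteinBoundOn isOpen_Ioi hbound
      (hE.summable_mul_pow (half_pos ht)) 1 (half_lt_self ht)

theorem hasSum_iteratedDeriv_radial (hE : IsHeatExpansion Λ g h A B) (ht : 0 < t) (n : ℕ)
    (r η : ℝ) :
    HasSum (fun i => exp (-Λ i * t) * iteratedDeriv n (g i) r * h i η)
      (iteratedDeriv n (fun ρ => ∑' i, exp (-Λ i * t) * g i ρ * h i η) r) := by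
  have hbound (i) : HasBernsteinBoundOn (fun ρ => exp (-Λ i * t) * h i η * g i ρ)
      Set.univ (Λ i) (A i * B i * exp (-Λ i * t)) := by
    have hA : 0 ≤ A i := (norm_nonneg _).trans ((hE.radial_bound i).norm_le (Set.mem_univ 0))
    refine ((hE.radial_bound i).const_mul (exp (-Λ i * t) * h i η)).mono_constant
      (hE.eigenvalue_nonneg i) ?_
    rw [norm_mul, norm_of_nonneg (exp_pos _).le]
    grw [(hE.angular_bound i).norm_le (Set.mem_univ η)]
    exact le_of_eq (by ring)
  have hsum := hasSum_iteratedDeriv_of_hasBernsteinBoundOn isOpen_univ hbound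
    (hE.summable_mul_pow ht) n (Set.mem_univ r)
  simp only [iteratedDeriv_const_mul_field] at hsum
  simpa only [mul_right_comm] using hsum

theorem hasSum_iteratedDeriv_angular (hE : IsHeatExpansion Λ g h A B) (ht : 0 < t) (n : ℕ)
    (r η : ℝ) :
    HasSum (fun i => exp (-Λ i * t) * g i r * iteratedDeriv n (h i) η)
      (iteratedDeriv n (fun θ => ∑' i, exp (-Λ i * t) * g i r * h i θ) η) := by
  simpa only [mul_right_comm] using hE.swap.hasSum_iteratedDeriv_radial ht n η r

theorem heat_equation (hE : IsHeatExpansion Λ g h A B) (ht : 0 < t) {p q s : ℝ} {μ : ι → ℝ}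
    (hg : ∀ i, deriv (deriv (g i)) r + p * deriv (g i) r = (q * μ i - Λ i) * g i r)
    (hh : ∀ i, deriv (deriv (h i)) η + s * deriv (h i) η = -μ i * h i η) :
    deriv (fun τ => ∑' i, exp (-Λ i * τ) * g i r * h i η) t
      = deriv (deriv fun ρ => ∑' i, exp (-Λ i * t) * g i ρ * h i η) r
        + p * deriv (fun ρ => ∑' i, exp (-Λ i * t) * g i ρ * h i η) r
        + q * (deriv (deriv fun θ => ∑' i, exp (-Λ i * t) * g i r * h i θ) η
          + s * deriv (fun θ => ∑' i, exp (-Λ i * t) * g i r * h i θ) η) := by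
  have hr₁ := hE.hasSum_iteratedDeriv_radial ht 1 r η
  have hr₂ := hE.hasSum_iteratedDeriv_radial ht 2 r η
  have hη₁ := hE.hasSum_iteratedDeriv_angular ht 1 r η
  have hη₂ := hE.hasSum_iteratedDeriv_angular ht 2 r η
  simp only [iteratedDeriv_succ, iteratedDeriv_zero] at hr₁ hr₂ hη₁ hη₂
  refine (hE.hasSum_deriv_time ht r η).unique ?_
  convert! (hr₂.add (hr₁.mul_left p)).add ((hη₂.add (hη₁.mul_left s)).mul_left q) using 2 with i
  linear_combination -exp (-Λ i * t) * h i η * hg i - q * exp (-Λ i * t) * g i r * hh i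

end IsHeatExpansion

end HeatExpansions

section ParametricIntegrals

variable {α G : Type*} [MeasurableSpace α] {μ : Measure α} [NormedAddCommGroup G] [NormedSpace ℝ G]
  {F : α → ℝ → G} {N : ℝ} {M : α → ℝ}

theorem aestronglyMeasurable_deriv_of_differentiableAt {x : ℝ}
    (hF : ∀ a, DifferentiableAt ℝ (F a) x) (hmeas : ∀ y, AEStronglyMeasurable (fun a => F a y) μ) :
    AEStronglyMeasurable (fun a => deriv (F a) x) μ :=
  aestronglyMeasurable_of_tendsto_ae (𝓝[≠] (0 : ℝ))
    (fun t => ((hmeas (x + t)).sub (hmeas x)).const_smul t⁻¹)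
    (.of_forall fun a => (hF a).hasDerivAt.tendsto_slope_zero)

theorem hasDerivAt_integral_of_hasBernsteinBoundOn
    (hF : ∀ a, HasBernsteinBoundOn (F a) Set.univ N (M a)) (hM : Integrable M μ)
    (hmeas : ∀ x, AEStronglyMeasurable (fun a => F a x) μ) (x : ℝ) :
    HasDerivAt (fun y => ∫ a, F a y ∂μ) (∫ a, deriv (F a) x ∂μ) x := by
  have hdiff (a) : Differentiable ℝ (F a) := (hF a).contDiff.differentiable (by simp)
  refine (hasDerivAt_integral_of_dominated_loc_of_deriv_le (Filter.univ_mem)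
    (.of_forall hmeas) (hM.mono' (hmeas x) (.of_forall fun a => (hF a).norm_le trivial))
    (aestronglyMeasurable_deriv_of_differentiableAt (fun a => hdiff a x) hmeas)
    (.of_forall fun a y _ => (hF a).deriv.norm_le trivial) (hM.mul_const N)
    (.of_forall fun a y _ => (hdiff a y).hasDerivAt)).2

theorem iteratedDeriv_integral_of_hasBernsteinBoundOn
    (hF : ∀ a, HasBernsteinBoundOn (F a) Set.univ N (M a)) (hM : Integrable M μ)
    (hmeas : ∀ x, AEStronglyMeasurable (fun a => F a x) μ) (n : ℕ) :
    iteratedDeriv n (fun x => ∫ a, F a x ∂μ) = fun x => ∫ a, iteratedDeriv n (F a) x ∂μ := by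
  induction n generalizing F M with
  | zero => simp
  | succ n ih =>
    have hdiff (x a) : DifferentiableAt ℝ (F a) x := (hF a).contDiff.differentiable (by simp) x
    have hderiv := funext fun x =>
      (hasDerivAt_integral_of_hasBernsteinBoundOn hF hM hmeas x).deriv
    simp only [iteratedDeriv_succ', hderiv]
    exact ih (fun a => (hF a).deriv) (hM.mul_const N)
      fun x => aestronglyMeasurable_deriv_of_differentiableAt (hdiff x) hmeas

theorem HasBernsteinBoundOn.integral (hF : ∀ a, HasBernsteinBoundOn (F a) Set.univ N (M a))
    (hM : Integrable M μ) (hmeas : ∀ x, AEStronglyMeasurable (fun a => F a x) μ) :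
    HasBernsteinBoundOn (fun x => ∫ a, F a x ∂μ) Set.univ N (∫ a, M a ∂μ) := by
  refine of_iteratedDeriv (contDiff_infty.2 fun n => ?_) fun n x _ => ?_
  · induction n generalizing F M with
    | zero =>
      exact contDiff_zero.2 <| continuous_iff_continuousAt.2 fun x =>
        (hasDerivAt_integral_of_hasBernsteinBoundOn hF hM hmeas x).continuousAt
    | succ n ih =>
      have hderiv := hasDerivAt_integral_of_hasBernsteinBoundOn hF hM hmeas
      have hdiff (x a) : DifferentiableAt ℝ (F a) x := (hF a).contDiff.differentiable (by simp) x
      push_cast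
      refine contDiff_succ_iff_deriv.2 ⟨fun x => (hderiv x).differentiableAt, by simp, ?_⟩
      rw [funext fun x => (hderiv x).deriv]
      exact ih (fun a => (hF a).deriv) (hM.mul_const N)
        fun x => aestronglyMeasurable_deriv_of_differentiableAt (hdiff x) hmeas
  · rw [iteratedDeriv_integral_of_hasBernsteinBoundOn hF hM hmeas, ← integral_mul_const]
    exact norm_integral_le_of_norm_le (hM.mul_const _)
      (.of_forall fun a => (hF a).norm_iteratedDeriv_le n trivial)

end ParametricIntegrals

section PowerIdentities

theorem natCast_mul_pow_pred_mul {R : Type*} [Semiring R] (m : ℕ) (z : R) :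
    m * z ^ (m - 1) * z = m * z ^ m := by
  cases m <;> simp [pow_succ, mul_assoc]

theorem natCast_mul_pred_mul_pow_mul_sq {R : Type*} [Ring R] (m : ℕ) (z : R) :
    m * ((m - 1 : ℕ) * z ^ (m - 1 - 1)) * z ^ 2 = m * (m - 1) * z ^ m := by
  rcases m with _ | _ | m
  · simp
  · simp
  · simp [pow_succ, mul_assoc]

end PowerIdentities

section ZonalIntegrals

variable {c η φ : ℝ}

/-- The curve `η ↦ cos η + i c sin η`; for `c = cos φ` its `m`-th power is the integrand of
Laplace's integral for the zonal harmonic `h_m`. -/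
noncomputable def laplaceBase (c η : ℝ) : ℂ :=
  (cos η : ℂ) + Complex.I * ((sin η * c : ℝ) : ℂ)

theorem hasDerivAt_laplaceBase (c η : ℝ) :
    HasDerivAt (laplaceBase c) (laplaceBase c (η + π / 2)) η := by
  rw [laplaceBase, cos_add_pi_div_two, sin_add_pi_div_two]
  exact (hasDerivAt_cos η).ofReal_comp.add
    (((hasDerivAt_sin η).mul_const c).ofReal_comp.const_mul Complex.I)

theorem iteratedDeriv_laplaceBase (n : ℕ) (c η : ℝ) :
    iteratedDeriv n (laplaceBase c) η = laplaceBase c (η + n * (π / 2)) := by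
  induction n generalizing η with
  | zero => simp
  | succ n ih =>
    rw [iteratedDeriv_succ, funext ih, deriv_comp_add_const, (hasDerivAt_laplaceBase c _).deriv]
    push_cast
    ring_nf

theorem norm_laplaceBase_le (hc : |c| ≤ 1) (η : ℝ) : ‖laplaceBase c η‖ ≤ 1 := by
  have hc' : c ^ 2 ≤ 1 := (sq_le_one_iff_abs_le_one c).2 hc
  refine (sq_le_one_iff₀ (norm_nonneg _)).1 ?_
  have hnorm : ‖laplaceBase c η‖ ^ 2 = cos η ^ 2 + sin η ^ 2 * c ^ 2 := by
    rw [Complex.sq_norm, laplaceBase, mul_comm Complex.I, Complex.normSq_add_mul_I, mul_pow]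
  nlinarith [sin_sq_add_cos_sq η, sq_nonneg (sin η)]

theorem contDiff_laplaceBase (c : ℝ) : ContDiff ℝ ∞ (laplaceBase c) :=
  (Complex.ofRealCLM.contDiff.comp contDiff_cos).add
    (contDiff_const.mul (Complex.ofRealCLM.contDiff.comp (contDiff_sin.mul contDiff_const)))

theorem hasBernsteinBoundOn_laplaceBase (hc : |c| ≤ 1) (s : Set ℝ) :
    HasBernsteinBoundOn (laplaceBase c) s 1 1 :=
  .of_iteratedDeriv (contDiff_laplaceBase c) fun n η _ => by
    simpa [iteratedDeriv_laplaceBase] using norm_laplaceBase_le hc _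

/-- Laplace's integral `∫₀^π (cos η + i sin η cos φ)^m sinⁿ φ dφ`, a complex form of the
unnormalized zonal harmonic of degree `m` on the sphere of dimension `n + 2`. -/
noncomputable def laplaceIntegral (n m : ℕ) (η : ℝ) : ℂ :=
  ∫ φ in (0 : ℝ)..π, (sin φ ^ n : ℝ) * laplaceBase (cos φ) η ^ m

theorem continuous_laplaceBase_cos (η : ℝ) : Continuous fun φ => laplaceBase (cos φ) η := by
  unfold laplaceBase; fun_prop

theorem hasBernsteinBoundOn_laplaceIntegrand (n m : ℕ) (φ : ℝ) :
    HasBernsteinBoundOn (fun η => (sin φ ^ n : ℝ) * laplaceBase (cos φ) η ^ m) Set.univ m 1 := by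
  have h := ((hasBernsteinBoundOn_laplaceBase (abs_cos_le_one φ) Set.univ).pow m).const_mul
    (sin φ ^ n : ℝ)
  rw [mul_one, one_pow, mul_one, Complex.norm_real, norm_pow] at h
  exact h.mono_constant m.cast_nonneg (pow_le_one₀ (norm_nonneg _) (abs_sin_le_one φ))

theorem integrableOn_laplaceIntegrand (n m : ℕ) (η : ℝ) :
    IntegrableOn (fun φ => ((sin φ ^ n : ℝ) : ℂ) * laplaceBase (cos φ) η ^ m) (Set.Ioc 0 π) :=
  Continuous.integrableOn_Ioc (by have := continuous_laplaceBase_cos η; fun_prop)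

theorem laplaceIntegral_eq_setIntegral (n m : ℕ) :
    laplaceIntegral n m = fun η =>
      ∫ φ in Set.Ioc (0 : ℝ) π, ((sin φ ^ n : ℝ) : ℂ) * laplaceBase (cos φ) η ^ m :=
  funext fun _ => intervalIntegral.integral_of_le pi_pos.le

theorem hasBernsteinBoundOn_laplaceIntegral (n m : ℕ) :
    HasBernsteinBoundOn (laplaceIntegral n m) Set.univ m π := by
  rw [laplaceIntegral_eq_setIntegral]
  simpa [pi_pos.le] using HasBernsteinBoundOn.integral (hasBernsteinBoundOn_laplaceIntegrand n m)
    (integrable_const _) fun η => (integrableOn_laplaceIntegrand n m η).aestronglyMeasurable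

theorem iteratedDeriv_laplaceIntegral (n m k : ℕ) (η : ℝ) :
    iteratedDeriv k (laplaceIntegral n m) η =
      ∫ φ in (0 : ℝ)..π, (sin φ ^ n : ℝ) *
        iteratedDeriv k (fun θ => laplaceBase (cos φ) θ ^ m) η := by
  rw [laplaceIntegral_eq_setIntegral, intervalIntegral.integral_of_le pi_pos.le,
    iteratedDeriv_integral_of_hasBernsteinBoundOn (hasBernsteinBoundOn_laplaceIntegrand n m)
      (integrable_const _) fun η => (integrableOn_laplaceIntegrand n m η).aestronglyMeasurable]
  simp only [iteratedDeriv_const_mul_field]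

theorem deriv_laplaceBase_pow (m : ℕ) (c : ℝ) :
    deriv (fun θ => laplaceBase c θ ^ m)
      = fun θ => m * laplaceBase c θ ^ (m - 1) * laplaceBase c (θ + π / 2) :=
  funext fun θ => ((hasDerivAt_laplaceBase c θ).fun_pow m).deriv

theorem laplaceBase_add_pi_div_two (c η : ℝ) :
    laplaceBase c (η + π / 2) = -(sin η : ℂ) + Complex.I * (cos η * c) := by
  simp [laplaceBase, sin_add_pi_div_two, cos_add_pi_div_two]

theorem laplaceBase_add_pi (c η : ℝ) : laplaceBase c (η + π) = -laplaceBase c η := by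
  simp only [laplaceBase, sin_add_pi, cos_add_pi]
  push_cast
  ring

theorem deriv_deriv_laplaceBase_pow (m : ℕ) (c η : ℝ) :
    deriv (deriv fun θ => laplaceBase c θ ^ m) η
      = m * ((m - 1 : ℕ) * laplaceBase c η ^ (m - 1 - 1)) * laplaceBase c (η + π / 2) ^ 2
        - m * laplaceBase c η ^ (m - 1) * laplaceBase c η := by
  have hshift := (hasDerivAt_laplaceBase c (η + π / 2)).comp_add_const η (π / 2)
  rw [deriv_laplaceBase_pow, ((((hasDerivAt_laplaceBase c η).fun_pow (m - 1)).const_mul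
    (m : ℂ)).fun_mul hshift).deriv, add_assoc, add_halves, laplaceBase_add_pi]
  ring

theorem sin_sq_add_cos_sq_ofReal (x : ℝ) : (sin x : ℂ) ^ 2 + (cos x : ℂ) ^ 2 = 1 :=
  mod_cast sin_sq_add_cos_sq x

theorem laplaceBase_sq_add_sq (φ η : ℝ) :
    laplaceBase (cos φ) η ^ 2 + laplaceBase (cos φ) (η + π / 2) ^ 2 = (sin φ : ℂ) ^ 2 := by
  rw [laplaceBase_add_pi_div_two, laplaceBase]
  push_cast [-Complex.ofReal_sin, -Complex.ofReal_cos]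
  linear_combination (1 + (cos φ : ℂ) ^ 2 * Complex.I ^ 2) * sin_sq_add_cos_sq_ofReal η
    + (cos φ : ℂ) ^ 2 * Complex.I_sq - sin_sq_add_cos_sq_ofReal φ

theorem sin_mul_laplaceBase_add (c η : ℝ) :
    sin η * laplaceBase c η + cos η * laplaceBase c (η + π / 2) = Complex.I * c := by
  rw [laplaceBase_add_pi_div_two, laplaceBase]
  push_cast [-Complex.ofReal_sin, -Complex.ofReal_cos]
  linear_combination Complex.I * c * sin_sq_add_cos_sq_ofReal η

theorem hasDerivAt_laplaceBase_cos (φ η : ℝ) :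
    HasDerivAt (fun ψ => laplaceBase (cos ψ) η) (-(Complex.I * (sin η * sin φ))) φ := by
  refine (((((hasDerivAt_cos φ).const_mul (sin η)).ofReal_comp).const_mul
    Complex.I).const_add (cos η : ℂ)).congr_deriv ?_
  push_cast
  ring

theorem hasDerivAt_gegenbauer_primitive (n m : ℕ) (hη : sin η ≠ 0) (φ : ℝ) :
    HasDerivAt
      (fun ψ => (sin ψ ^ (n + 1) : ℝ) * (m * laplaceBase (cos ψ) η ^ (m - 1)) *
        (Complex.I / sin η))
      ((sin φ ^ n : ℝ) * (deriv (deriv fun θ => laplaceBase (cos φ) θ ^ m) η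
        + (n + 1) * cot η * deriv (fun θ => laplaceBase (cos φ) θ ^ m) η
        + m * (m + n + 1) * laplaceBase (cos φ) η ^ m)) φ := by
  have hη' : (sin η : ℂ) ≠ 0 := mod_cast hη
  refine (((((hasDerivAt_sin φ).fun_pow (n + 1)).ofReal_comp.fun_mul
    (((hasDerivAt_laplaceBase_cos φ η).fun_pow (m - 1)).const_mul (m : ℂ))).mul_const
      (Complex.I / sin η))).congr_deriv ?_
  have hcot : laplaceBase (cos φ) η + cot η * laplaceBase (cos φ) (η + π / 2)
      = Complex.I * cos φ / sin η := by
    rw [cot_eq_cos_div_sin, ← sin_mul_laplaceBase_add (cos φ) η]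
    push_cast [-Complex.ofReal_sin, -Complex.ofReal_cos]
    field_simp
  have hI : Complex.I * (sin η * sin φ) * (Complex.I / sin η) = -(sin φ : ℂ) := by
    field_simp
    simp
  rw [deriv_deriv_laplaceBase_pow, deriv_laplaceBase_pow]
  push_cast [-Complex.ofReal_sin, -Complex.ofReal_cos, -Complex.ofReal_cot, Nat.add_sub_cancel]
  have hsq := laplaceBase_sq_add_sq φ η
  have hpow₁ := natCast_mul_pow_pred_mul m (laplaceBase (cos φ) η)
  have hpow₂ := natCast_mul_pred_mul_pow_mul_sq m (laplaceBase (cos φ) η)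
  generalize laplaceBase (cos φ) η = z at *
  generalize laplaceBase (cos φ) (η + π / 2) = w at *
  linear_combination (-((n + 1) * (sin φ : ℂ) ^ n * m * z ^ (m - 1))) * hcot
    - (sin φ : ℂ) ^ (n + 1) * m * ((m - 1 : ℕ) * z ^ (m - 1 - 1)) * hI
    - (sin φ : ℂ) ^ n * m * ((m - 1 : ℕ) * z ^ (m - 1 - 1)) * hsq
    + (sin φ : ℂ) ^ n * hpow₂ + (n + 2) * (sin φ : ℂ) ^ n * hpow₁

theorem laplaceIntegral_gegenbauer_ode (n m : ℕ) (hη : sin η ≠ 0) :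
    deriv (deriv (laplaceIntegral n m)) η + (n + 1) * cot η * deriv (laplaceIntegral n m) η
      = -(m * (m + n + 1)) * laplaceIntegral n m η := by
  have hD₁ := iteratedDeriv_laplaceIntegral n m 1 η
  have hD₂ := iteratedDeriv_laplaceIntegral n m 2 η
  simp only [iteratedDeriv_succ, iteratedDeriv_zero] at hD₁ hD₂
  have hcont := continuous_laplaceBase_cos η
  have hcont' := continuous_laplaceBase_cos (η + π / 2)
  have hint₁ : Continuous fun φ =>
      ((sin φ ^ n : ℝ) : ℂ) * deriv (fun θ => laplaceBase (cos φ) θ ^ m) η := by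
    simp only [deriv_laplaceBase_pow]; fun_prop
  have hint₂ : Continuous fun φ =>
      ((sin φ ^ n : ℝ) : ℂ) * deriv (deriv fun θ => laplaceBase (cos φ) θ ^ m) η := by
    simp only [deriv_deriv_laplaceBase_pow]; fun_prop
  have hprim := intervalIntegral.integral_eq_sub_of_hasDerivAt (a := 0) (b := π)
    (fun φ _ => hasDerivAt_gegenbauer_primitive n m hη φ)
  generalize (m * (m + n + 1) : ℂ) = κ at hprim ⊢
  simp only [mul_add, mul_left_comm ((sin _ ^ n : ℝ) : ℂ)] at hprim
  specialize hprim (by apply Continuous.intervalIntegrable; fun_prop)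
  rw [intervalIntegral.integral_add, intervalIntegral.integral_add,
    intervalIntegral.integral_const_mul, intervalIntegral.integral_const_mul] at hprim
  · rw [hD₂, hD₁, laplaceIntegral]
    simp only [sin_pi, sin_zero, ne_eq, Nat.add_eq_zero_iff, one_ne_zero, and_false,
      not_false_eq_true, zero_pow, Complex.ofReal_zero, zero_mul, sub_self] at hprim
    linear_combination hprim
  all_goals apply Continuous.intervalIntegrable; fun_prop

end ZonalIntegrals

section SphericalFactor

theorem hOct_eq_re_laplaceIntegral (m : ℕ) :
    hOct m = fun η => Gamma (7 / 2) / (√π * Gamma 3) * Complex.reCLM (laplaceIntegral 5 m η) := by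
  funext η
  have hcont := continuous_laplaceBase_cos η
  rw [hOct, laplaceIntegral, ← Complex.reCLM.intervalIntegral_comp_comm
    (Continuous.intervalIntegrable (by fun_prop) 0 π)]
  simp only [Complex.reCLM_apply, Complex.re_ofReal_mul, laplaceBase, mul_comm (sin _ ^ 5)]

/-- A constant `M` with `|h_m⁽ⁿ⁾| ≤ M mⁿ` for all `m` and `n`. -/
noncomputable def hOctBound : ℝ :=
  ‖Gamma (7 / 2) / (√π * Gamma 3)‖ * (‖Complex.reCLM‖ * π)

theorem hasBernsteinBoundOn_hOct (m : ℕ) :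
    HasBernsteinBoundOn (hOct m) Set.univ m hOctBound := by
  rw [hOct_eq_re_laplaceIntegral]
  exact ((hasBernsteinBoundOn_laplaceIntegral 5 m).clm_comp Complex.reCLM).const_mul _

theorem hOct_gegenbauer_ode (m : ℕ) {η : ℝ} (hη : sin η ≠ 0) :
    deriv (deriv (hOct m)) η + 6 * cot η * deriv (hOct m) η = -(m * (m + 6)) * hOct m η := by
  have hL {f : ℝ → ℂ} (hf : Differentiable ℝ f) :
      deriv (fun θ => Gamma (7 / 2) / (√π * Gamma 3) * Complex.reCLM (f θ))
        = fun θ => Gamma (7 / 2) / (√π * Gamma 3) * Complex.reCLM (deriv f θ) :=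
    funext fun θ =>
      ((Complex.reCLM.hasFDerivAt.comp_hasDerivAt θ (hf θ).hasDerivAt).const_mul _).deriv
  have hI := hasBernsteinBoundOn_laplaceIntegral 5 m
  have hode : (deriv (deriv (laplaceIntegral 5 m)) η).re
      + 6 * cot η * (deriv (laplaceIntegral 5 m) η).re
      = -(m * (m + 6)) * (laplaceIntegral 5 m η).re := by
    have hre := congrArg Complex.re (laplaceIntegral_gegenbauer_ode 5 m hη)
    simp only [Nat.cast_ofNat, ← Complex.ofReal_natCast, neg_mul, Complex.neg_re, Complex.add_re,
      Complex.mul_re, Complex.add_im, Complex.mul_im, Complex.re_ofNat, Complex.im_ofNat,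
      Complex.one_re, Complex.one_im, Complex.ofReal_re, Complex.ofReal_im] at hre
    linear_combination hre
  rw [hOct_eq_re_laplaceIntegral, hL (hI.contDiff.differentiable (by simp)),
    hL (hI.deriv.contDiff.differentiable (by simp))]
  simp only [Complex.reCLM_apply]
  linear_combination Gamma (7 / 2) / (√π * Gamma 3) * hode

end SphericalFactor

section JacobiPolynomials

open Polynomial

/-- The weight `(1 - X)ᵃ (1 + X)ᵇ` for which the Jacobi polynomials are orthogonal. -/
noncomputable def jacobiWeight (a b : ℕ) : ℝ[X] :=
  (1 - X) ^ a * (1 + X) ^ b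

theorem jacobiWeight_ne_zero (a b : ℕ) : jacobiWeight a b ≠ 0 := by
  intro h
  simpa [jacobiWeight] using congrArg (eval 0) h

theorem one_sub_X_sq_mul_derivative_jacobiWeight (a b : ℕ) :
    (1 - X ^ 2) * derivative (jacobiWeight a b)
      = (C (b - a : ℝ) - C (a + b : ℝ) * X) * jacobiWeight a b := by
  have hminus := natCast_mul_pow_pred_mul a (1 - X : ℝ[X])
  have hplus := natCast_mul_pow_pred_mul b (1 + X : ℝ[X])
  simp only [jacobiWeight, derivative_mul, derivative_pow, derivative_sub, derivative_add,
    derivative_one, derivative_X, C_eq_natCast, C_sub, C_add]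
  linear_combination (1 - X) * (1 - X) ^ a * hplus - (1 + X) * (1 + X) ^ b * hminus

theorem one_sub_X_sq_mul_derivative_derivative_jacobiWeight (a b : ℕ) :
    (1 - X ^ 2) * derivative (derivative (jacobiWeight a b))
      = (C (b - a : ℝ) - C (a + b - 2 : ℝ) * X) * derivative (jacobiWeight a b)
        - C (a + b : ℝ) * jacobiWeight a b := by
  have h := congrArg derivative (one_sub_X_sq_mul_derivative_jacobiWeight a b)
  simp only [derivative_mul, derivative_sub, derivative_add, derivative_one, derivative_X_sq,
    derivative_X, derivative_C, C_sub, C_add, map_ofNat C 2] at h ⊢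
  linear_combination h

theorem iterate_derivative_hypergeometric_ode {W : ℝ[X]} {p q c : ℝ}
    (hW : (1 - X ^ 2) * derivative (derivative W) = (C p - C q * X) * derivative W - C c * W)
    (k : ℕ) :
    (1 - X ^ 2) * derivative (derivative (derivative^[k] W))
      = (C p - C (q - 2 * k) * X) * derivative (derivative^[k] W)
        - C (c + k * q - k * (k - 1)) * derivative^[k] W := by
  have hW' : derivative^[2] W - derivative^[2] W * X ^ 2
      = C p * derivative W - C q * (derivative W * X) - C c * W := by
    simp only [Function.iterate_succ_apply, Function.iterate_zero_apply]
    linear_combination hW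
  have hk := congrArg (derivative^[k]) hW'
  simp only [iterate_derivative_sub, iterate_derivative_C_mul, iterate_derivative_derivative_mul_X,
    iterate_derivative_derivative_mul_X_sq, ← Function.iterate_add_apply,
    ← Function.iterate_succ_apply, nsmul_eq_mul] at hk
  have hpred : ((k * (k - 1) : ℕ) : ℝ[X]) = k * (k - 1) := by cases k <;> simp
  rw [hpred] at hk
  simp only [← Function.iterate_succ_apply', C_sub, C_add, C_mul, C_eq_natCast, map_one,
    map_ofNat C 2]
  push_cast at hk
  linear_combination hk

theorem iterate_derivative_jacobiWeight_ode (a b k : ℕ) :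
    (1 - X ^ 2) * derivative (derivative (derivative^[k] (jacobiWeight (k + a) (k + b))))
      = (C (b - a : ℝ) - C (a + b - 2 : ℝ) * X)
          * derivative (derivative^[k] (jacobiWeight (k + a) (k + b)))
        - C ((k + 1) * (k + a + b) : ℝ) * derivative^[k] (jacobiWeight (k + a) (k + b)) := by
  have h := iterate_derivative_hypergeometric_ode
    (one_sub_X_sq_mul_derivative_derivative_jacobiWeight (k + a) (k + b)) k
  push_cast at h
  convert h using 3 <;> ring_nf

theorem iterate_derivative_one_sub_X_pow (n j : ℕ) :
    derivative^[j] ((1 - X : ℝ[X]) ^ n)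
      = (-1) ^ j * ((n.descFactorial j : ℝ[X]) * (1 - X) ^ (n - j)) := by
  simpa [iterate_derivative_X_pow_eq_natCast_mul] using
    iterate_derivative_comp_one_sub_X (X ^ n : ℝ[X]) j

theorem iterate_derivative_one_add_X_pow (n j : ℕ) :
    derivative^[j] ((1 + X : ℝ[X]) ^ n) = (n.descFactorial j : ℝ[X]) * (1 + X) ^ (n - j) := by
  simpa [add_comm] using iterate_derivative_X_add_pow n j (1 : ℝ)

/-- The Jacobi polynomial `P_k^{a,b}` with natural parameters, in expanded form. -/
noncomputable def jacobi (a b k : ℕ) : ℝ[X] :=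
  ∑ s ∈ Finset.range (k + 1),
    C ((-1 : ℝ) ^ s * ((k + a).choose (k - s) * (k + b).choose s : ℕ) / 2 ^ k) *
      ((1 - X) ^ s * (1 + X) ^ (k - s))

theorem choose_mul_descFactorial_mul_descFactorial {k s : ℕ} (p q : ℕ) (hs : s ≤ k) :
    k.choose s * (p.descFactorial (k - s) * q.descFactorial s)
      = k.factorial * (p.choose (k - s) * q.choose s) := by
  rw [Nat.descFactorial_eq_factorial_mul_choose, Nat.descFactorial_eq_factorial_mul_choose,
    ← Nat.choose_mul_factorial_mul_factorial hs]
  ring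

theorem iterate_derivative_jacobiWeight (a b k : ℕ) :
    derivative^[k] (jacobiWeight (k + a) (k + b))
      = jacobiWeight a b * (C ((-1 : ℝ) ^ k * 2 ^ k * k.factorial) * jacobi a b k) := by
  rw [jacobiWeight, iterate_derivative_mul, jacobi, Finset.mul_sum, Finset.mul_sum]
  refine Finset.sum_congr rfl fun s hs => ?_
  obtain ⟨j, rfl⟩ := exists_add_of_le (Nat.lt_succ_iff.1 (Finset.mem_range.1 hs))
  have hdesc := congrArg (Nat.cast (R := ℝ[X]))
    (choose_mul_descFactorial_mul_descFactorial (s + j + a) (s + j + b) (Nat.le_add_right s j))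
  have hcoeff (N : ℕ) : C ((-1 : ℝ) ^ (s + j) * 2 ^ (s + j) * (s + j).factorial)
      * C ((-1 : ℝ) ^ s * N / 2 ^ (s + j)) = (-1) ^ j * ((s + j).factorial * N : ℕ) := by
    rw [← C_mul, ← C_eq_natCast, ← C_1, ← C_neg, ← C_pow, ← C_mul]
    congr 1
    push_cast
    field_simp
    rw [pow_add]
    linear_combination N * (-1 : ℝ) ^ j * pow_mul_pow_eq_one s (by norm_num : (-1 : ℝ) * -1 = 1)
  rw [iterate_derivative_one_sub_X_pow, iterate_derivative_one_add_X_pow, jacobiWeight,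
    Nat.add_sub_cancel_left, show s + j + a - j = a + s by omega,
    show s + j + b - s = b + j by omega, pow_add, pow_add, nsmul_eq_mul]
  rw [Nat.add_sub_cancel_left] at hdesc
  specialize hcoeff ((s + j + a).choose j * (s + j + b).choose s)
  push_cast at hdesc hcoeff ⊢
  linear_combination (-1) ^ j * ((1 - X) ^ a * (1 - X) ^ s * ((1 + X) ^ b * (1 + X) ^ j)) * hdesc
    - ((1 - X) ^ a * (1 - X) ^ s * ((1 + X) ^ b * (1 + X) ^ j)) * hcoeff

theorem jacobi_ode (a b k : ℕ) :
    (1 - X ^ 2) * derivative (derivative (jacobi a b k))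
      + (C (b - a : ℝ) - C (a + b + 2 : ℝ) * X) * derivative (jacobi a b k)
      + C (k * (k + a + b + 1) : ℝ) * jacobi a b k = 0 := by
  have hode := iterate_derivative_jacobiWeight_ode a b k
  have hw₁ := one_sub_X_sq_mul_derivative_jacobiWeight a b
  have hw₂ := one_sub_X_sq_mul_derivative_derivative_jacobiWeight a b
  have hc : C ((-1 : ℝ) ^ k * 2 ^ k * k.factorial) ≠ 0 := by
    simp [Nat.factorial_ne_zero]
  refine (mul_eq_zero_iff_left (mul_ne_zero (jacobiWeight_ne_zero a b) hc)).1 ?_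
  rw [iterate_derivative_jacobiWeight] at hode
  generalize (-1 : ℝ) ^ k * 2 ^ k * k.factorial = c at hode ⊢
  generalize jacobiWeight a b = w at hw₁ hw₂ hode ⊢
  simp only [derivative_mul, derivative_add, derivative_C, zero_mul, zero_add, C_sub, C_add, C_mul,
    map_one, map_ofNat C 2] at hw₁ hw₂ hode ⊢
  linear_combination hode - C c * jacobi a b k * hw₂ - 2 * C c * derivative (jacobi a b k) * hw₁

theorem jacP_eq_jacobi (k b : ℕ) : jacP k b = jacobi 3 b k := by
  have h := iterate_derivative_jacobiWeight 3 b k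
  rw [add_comm k b] at h
  rw [jacP, ← jacobiWeight, ← jacobiWeight, h, mul_div_cancel_left₀ _ (jacobiWeight_ne_zero 3 b),
    ← mul_assoc, ← C_mul]
  have : (k.factorial : ℝ) ≠ 0 := by positivity
  rw [show (-1 : ℝ) ^ k / (2 ^ k * k.factorial) * ((-1) ^ k * 2 ^ k * k.factorial) = 1 by
    field_simp; rw [← pow_mul, mul_comm, pow_mul]; simp, C_1, one_mul]

theorem eval_jacobi_cos_two_mul (a b k : ℕ) (r : ℝ) :
    (jacobi a b k).eval (cos (2 * r))
      = ∑ s ∈ Finset.range (k + 1), (-1) ^ s * ((k + a).choose (k - s) * (k + b).choose s : ℕ) *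
          (sin r ^ (2 * s) * cos r ^ (2 * (k - s))) := by
  have hminus : 1 - cos (2 * r) = 2 * sin r ^ 2 := by
    rw [cos_two_mul]; linear_combination -2 * sin_sq_add_cos_sq r
  have hplus : 1 + cos (2 * r) = 2 * cos r ^ 2 := by rw [cos_two_mul]; ring
  rw [jacobi, eval_finsetSum]
  refine Finset.sum_congr rfl fun s hs => ?_
  have hpow : (2 : ℝ) ^ k = 2 ^ s * 2 ^ (k - s) := by
    rw [← pow_add, Nat.add_sub_cancel' (Nat.lt_succ_iff.1 (Finset.mem_range.1 hs))]
  simp only [eval_mul, eval_pow, eval_sub, eval_add, eval_one, eval_X, eval_C, hminus, hplus,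
    mul_pow, hpow, ← pow_mul]
  field_simp

/-- The trigonometric form `cosᵐ r · P_k^{a,b}(cos 2r)` of a Jacobi polynomial. -/
noncomputable def jacobiTrig (m a b k : ℕ) (r : ℝ) : ℝ :=
  cos r ^ m * (jacobi a b k).eval (cos (2 * r))

theorem hasBernsteinBoundOn_jacobiTrig (m a b k : ℕ) :
    HasBernsteinBoundOn (jacobiTrig m a b k) Set.univ (m + 2 * k : ℕ)
      ((2 * k + a + b).choose k : ℕ) := by
  have hexpand : jacobiTrig m a b k = fun r => ∑ s ∈ Finset.range (k + 1),
      ((-1) ^ s * ((k + a).choose (k - s) * (k + b).choose s : ℕ)) *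
        (cos r ^ m * (sin r ^ (2 * s) * cos r ^ (2 * (k - s)))) := by
    funext r
    rw [jacobiTrig, eval_jacobi_cos_two_mul, Finset.mul_sum]
    exact Finset.sum_congr rfl fun s _ => by ring
  have hVandermonde : (2 * k + a + b).choose k
      = ∑ s ∈ Finset.range (k + 1), (k + a).choose (k - s) * (k + b).choose s := by
    rw [show 2 * k + a + b = (k + b) + (k + a) by ring, Nat.add_choose_eq,
      Finset.Nat.sum_antidiagonal_eq_sum_range_succ_mk]
    exact Finset.sum_congr rfl fun s _ => mul_comm _ _
  rw [hexpand, hVandermonde, Nat.cast_sum]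
  refine .sum fun s hs => ?_
  have hs' : s ≤ k := Nat.lt_succ_iff.1 (Finset.mem_range.1 hs)
  have hmonomial : HasBernsteinBoundOn _ Set.univ _ _ :=
    ((HasBernsteinBoundOn.cos.pow m).mul ((HasBernsteinBoundOn.sin.pow (2 * s)).mul
      (HasBernsteinBoundOn.cos.pow (2 * (k - s))))).const_mul
        ((-1) ^ s * ((k + a).choose (k - s) * (k + b).choose s : ℕ) : ℝ)
  have hfrequency : ((m + 2 * k : ℕ) : ℝ)
      = m * 1 + ((2 * s : ℕ) * 1 + (2 * (k - s) : ℕ) * 1) := by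
    push_cast [Nat.cast_sub hs']
    ring
  simpa [hfrequency] using hmonomial

theorem deriv_eval_cos_two_mul (P : ℝ[X]) :
    deriv (fun r => P.eval (cos (2 * r)))
      = fun r => -2 * sin (2 * r) * (derivative P).eval (cos (2 * r)) := by
  funext r
  have h := (P.hasDerivAt _).comp r ((hasDerivAt_id' r).const_mul 2).cos
  exact h.deriv.trans (by ring)

theorem deriv_deriv_eval_cos_two_mul (P : ℝ[X]) (r : ℝ) :
    deriv (deriv fun r => P.eval (cos (2 * r))) r
      = 4 * (1 - cos (2 * r) ^ 2) * (derivative (derivative P)).eval (cos (2 * r))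
        - 4 * cos (2 * r) * (derivative P).eval (cos (2 * r)) := by
  have hsin : deriv (fun r => -2 * sin (2 * r)) r = -4 * cos (2 * r) :=
    ((((hasDerivAt_id' r).const_mul 2).sin).const_mul (-2)).deriv.trans (by ring)
  rw [deriv_eval_cos_two_mul, deriv_fun_mul (by fun_prop)
    ((derivative P).differentiable.fun_comp (by fun_prop) r), hsin,
    deriv_eval_cos_two_mul (derivative P), ← sin_sq]
  ring

theorem jacobi_cos_two_mul_ode (a b k : ℕ) {r : ℝ} (hs : sin r ≠ 0) (hc : cos r ≠ 0) :
    let y := fun ρ => (jacobi a b k).eval (cos (2 * ρ))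
    deriv (deriv y) r + ((2 * a + 1) * cot r - (2 * b + 1) * tan r) * deriv y r
      = -4 * (k * (k + a + b + 1)) * y r := by
  intro y
  have hode := congrArg (eval (cos (2 * r))) (jacobi_ode a b k)
  simp only [eval_add, eval_mul, eval_sub, eval_one, eval_pow, eval_X, eval_C, eval_zero] at hode
  have hcot : cot r * sin (2 * r) = 1 + cos (2 * r) := by
    rw [cot_eq_cos_div_sin, sin_two_mul, cos_two_mul]
    field_simp
    ring
  have htan : tan r * sin (2 * r) = 1 - cos (2 * r) := by
    rw [tan_eq_sin_div_cos, sin_two_mul, cos_two_mul']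
    field_simp
    linear_combination sin_sq_add_cos_sq r
  rw [deriv_deriv_eval_cos_two_mul, deriv_eval_cos_two_mul]
  linear_combination 4 * hode
    - 2 * (derivative (jacobi a b k)).eval (cos (2 * r))
      * ((2 * a + 1) * hcot - (2 * b + 1) * htan)

theorem deriv_cos_pow (m : ℕ) :
    deriv (fun r => cos r ^ m) = fun r => m * cos r ^ (m - 1) * -sin r :=
  funext fun r => ((hasDerivAt_cos r).fun_pow m).deriv

theorem deriv_cos_pow_eq_tan (m : ℕ) {r : ℝ} (hc : cos r ≠ 0) :
    deriv (fun r => cos r ^ m) r = -m * tan r * cos r ^ m := by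
  rw [deriv_cos_pow]
  linear_combination -tan r * natCast_mul_pow_pred_mul m (cos r)
    + m * cos r ^ (m - 1) * tan_mul_cos hc

theorem deriv_deriv_cos_pow_eq_tan (m : ℕ) {r : ℝ} (hc : cos r ≠ 0) :
    deriv (deriv fun r => cos r ^ m) r = (m * (m - 1) * tan r ^ 2 - m) * cos r ^ m := by
  rw [deriv_cos_pow, ((((hasDerivAt_cos r).fun_pow (m - 1)).const_mul (m : ℝ)).fun_mul
    (hasDerivAt_sin r).fun_neg).deriv, ← tan_mul_cos hc]
  linear_combination tan r ^ 2 * natCast_mul_pred_mul_pow_mul_sq m (cos r)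
    - natCast_mul_pow_pred_mul m (cos r)

/-- Conjugation by `cosᵐ` trades the drift `-2m tan r` for the potential `m(m + 2a) tan² r`. -/
theorem cos_pow_mul_ode (m a : ℕ) {y : ℝ → ℝ} (hy : ContDiff ℝ ∞ y) {r κ : ℝ} (hs : sin r ≠ 0)
    (hc : cos r ≠ 0)
    (hode : deriv (deriv y) r + ((2 * a + 1) * cot r - (2 * (m + a) + 1) * tan r) * deriv y r
      = -κ * y r) :
    deriv (deriv fun ρ => cos ρ ^ m * y ρ) r
        + ((2 * a + 1) * cot r - (2 * a + 1) * tan r) * deriv (fun ρ => cos ρ ^ m * y ρ) r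
      = (tan r ^ 2 * (m * (m + 2 * a)) - (κ + 2 * (a + 1) * m)) * (cos r ^ m * y r) := by
  have hy' : Differentiable ℝ y := hy.differentiable (by simp)
  have hy'' : Differentiable ℝ (deriv y) :=
    (contDiff_infty_iff_deriv.1 hy).2.differentiable (by simp)
  have hu' : Differentiable ℝ (deriv fun ρ => cos ρ ^ m) := by
    rw [deriv_cos_pow]; fun_prop
  have hprod : deriv (fun ρ => cos ρ ^ m * y ρ)
      = fun ρ => deriv (fun ρ => cos ρ ^ m) ρ * y ρ + cos ρ ^ m * deriv y ρ :=
    funext fun ρ => deriv_fun_mul (by fun_prop) (hy' ρ)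
  rw [hprod, deriv_fun_add (by fun_prop) (by fun_prop), deriv_fun_mul (hu' r) (hy' r),
    deriv_fun_mul (by fun_prop) (hy'' r), deriv_deriv_cos_pow_eq_tan m hc]
  beta_reduce
  rw [deriv_cos_pow_eq_tan m hc]
  have hcot : cot r * tan r = 1 := by
    rw [cot_eq_cos_div_sin, tan_eq_sin_div_cos]; field_simp
  linear_combination cos r ^ m * hode - (2 * a + 1) * m * cos r ^ m * y r * hcot

theorem jacobiTrig_ode (m a k : ℕ) {r : ℝ} (hs : sin r ≠ 0) (hc : cos r ≠ 0) :
    deriv (deriv (jacobiTrig m a (m + a) k)) r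
        + ((2 * a + 1) * cot r - (2 * a + 1) * tan r) * deriv (jacobiTrig m a (m + a) k) r
      = (tan r ^ 2 * (m * (m + 2 * a))
          - (4 * (k * (k + m + 2 * a + 1)) + 2 * (a + 1) * m)) * jacobiTrig m a (m + a) k r := by
  have hy : ContDiff ℝ ∞ fun ρ => (jacobi a (m + a) k).eval (cos (2 * ρ)) := by
    simpa only [coe_aeval_eq_eval] using
      ((jacobi a (m + a) k).contDiff_aeval ∞).fun_comp
        (contDiff_cos.fun_comp (contDiff_const.mul contDiff_id) : ContDiff ℝ ∞ fun ρ => cos (2 * ρ))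
  refine cos_pow_mul_ode m a hy hs hc ?_
  have h := jacobi_cos_two_mul_ode a (m + a) k hs hc
  push_cast at h
  linear_combination h

end JacobiPolynomials

section OctonionicSpectrum

variable {t : ℝ}

theorem summable_pow_mul_exp_neg_mul_sq {q a : ℝ} (hq : 0 < q) (ha : 0 < a) :
    Summable fun k : ℕ => q ^ k * exp (-a * k ^ 2) := by
  have h := (summable_pow_mul_jacobiTheta₂_term_bound (log q / (2 * π)) (div_pos ha pi_pos)
    0).comp_injective Nat.cast_injective
  refine h.congr fun k => ?_
  have hexponent : -π * (a / π * k ^ 2 - 2 * (log q / (2 * π)) * k) = k * log q + -a * k ^ 2 := by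
    field_simp
    ring
  simp only [Function.comp_apply, pow_zero, one_mul, Int.cast_natCast, Nat.abs_cast, hexponent,
    exp_add, exp_nat_mul, exp_log hq]

theorem choose_le_inv_pow_mul_exp (ht : 0 < t) (n k : ℕ) :
    (n.choose k : ℝ) ≤ t⁻¹ ^ k * exp (k * (n * t)) := by
  have hn : (n : ℝ) ≤ t⁻¹ * exp (n * t) := by
    rw [inv_mul_eq_div, le_div_iff₀ ht]
    linarith [add_one_le_exp (n * t)]
  calc (n.choose k : ℝ) ≤ (n : ℝ) ^ k := mod_cast Nat.choose_le_pow n k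
    _ ≤ (t⁻¹ * exp (n * t)) ^ k := by gcongr
    _ = t⁻¹ ^ k * exp (k * (n * t)) := by rw [mul_pow, exp_nat_mul _ k]

theorem alphOct_nonneg (k m : ℕ) : 0 ≤ alphOct k m := by
  unfold alphOct
  positivity

theorem alphOct_le (k m : ℕ) : alphOct k m ≤ 384 * (k + m + 7 : ℕ) ^ 10 := by
  set x := k + m + 7
  have hπ : 96 / π ^ 8 ≤ 96 :=
    div_le_self (by norm_num) (one_le_pow₀ (by linarith [pi_gt_three]))
  have hchoose₁ : (k + m + 6).choose (k + m + 3) ≤ x ^ 3 := by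
    rw [Nat.choose_symm_of_eq_add (show k + m + 6 = (k + m + 3) + 3 by ring)]
    exact (Nat.choose_le_pow _ _).trans (Nat.pow_le_pow_left (by lia) _)
  have hchoose₂ : (m + 5).choose m ≤ x ^ 5 := by
    rw [Nat.choose_symm_add]
    exact (Nat.choose_le_pow _ _).trans (Nat.pow_le_pow_left (by lia) _)
  calc alphOct k m
      = 96 / π ^ 8 * (m + 3 : ℕ) * (2 * k + m + 7 : ℕ) * ((k + m + 6).choose (k + m + 3) : ℕ) *
          ((m + 5).choose m : ℕ) := by
        rw [alphOct]
        push_cast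
        rfl
    _ ≤ 96 * (2 * x : ℕ) * (2 * x : ℕ) * (x ^ 3 : ℕ) * (x ^ 5 : ℕ) := by gcongr <;> lia
    _ = 384 * x ^ 10 := by
        push_cast
        ring

theorem alphOct_le_mul_exp (ht : 0 < t) (k m : ℕ) :
    alphOct k m ≤ 384 * Nat.factorial 10 / t ^ 10 * exp ((k + m + 7 : ℕ) * t) := by
  refine (alphOct_le k m).trans ?_
  have hexp := pow_div_factorial_le_exp ((k + m + 7 : ℕ) * t) (by positivity) 10
  rw [mul_pow, div_le_iff₀ (by positivity)] at hexp
  rw [div_mul_eq_mul_div, le_div_iff₀ (by positivity)]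
  linarith

/-- The eigenvalue `4(k(k + m + 7) + 2m)` attached to the index `i = (m, k)`. -/
noncomputable def octEigenvalue (i : ℕ × ℕ) : ℝ :=
  4 * (i.2 * (i.2 + i.1 + 7) + 2 * i.1 : ℕ)

theorem octEigenvalue_nonneg (i : ℕ × ℕ) : 0 ≤ octEigenvalue i := by
  unfold octEigenvalue
  positivity

theorem fst_le_octEigenvalue (i : ℕ × ℕ) : i.1 ≤ octEigenvalue i := by
  have h : i.1 ≤ 4 * (i.2 * (i.2 + i.1 + 7) + 2 * i.1) := by lia
  unfold octEigenvalue
  exact_mod_cast h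

theorem fst_add_two_mul_snd_le_octEigenvalue (i : ℕ × ℕ) :
    (i.1 + 2 * i.2 : ℕ) ≤ octEigenvalue i := by
  have h : i.1 + 2 * i.2 ≤ 4 * (i.2 * (i.2 + i.1 + 7) + 2 * i.1) := by nlinarith
  unfold octEigenvalue
  exact_mod_cast h

theorem alphOct_mul_choose_mul_exp_le (ht : 0 < t) (m k : ℕ) :
    alphOct k m * (2 * k + 3 + (m + 3)).choose k * exp (-octEigenvalue (m, k) * t)
      ≤ 384 * Nat.factorial 10 / t ^ 10 * exp (7 * t) *
        (exp (-(7 * t)) ^ m * (t⁻¹ ^ k * exp (-(2 * t) * k ^ 2))) := by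
  set K := 384 * Nat.factorial 10 / t ^ 10
  set n := 2 * k + 3 + (m + 3) with hn
  have hexponent : (k + m + 7 : ℕ) * t + k * (n * t) + -octEigenvalue (m, k) * t
      ≤ 7 * t + m * (-(7 * t)) + -(2 * t) * k ^ 2 := by
    have : 0 ≤ t * (3 * k * m + 21 * k) := by positivity
    rw [octEigenvalue, hn]
    push_cast
    linarith
  calc alphOct k m * n.choose k * exp (-octEigenvalue (m, k) * t)
      ≤ K * exp ((k + m + 7 : ℕ) * t) * (t⁻¹ ^ k * exp (k * (n * t)))
          * exp (-octEigenvalue (m, k) * t) := by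
        gcongr
        exacts [alphOct_le_mul_exp ht k m, choose_le_inv_pow_mul_exp ht n k]
    _ = K * t⁻¹ ^ k * exp ((k + m + 7 : ℕ) * t + k * (n * t) + -octEigenvalue (m, k) * t) := by
        rw [exp_add, exp_add]
        ring
    _ ≤ K * t⁻¹ ^ k * exp (7 * t + m * (-(7 * t)) + -(2 * t) * k ^ 2) := by gcongr
    _ = K * exp (7 * t) * (exp (-(7 * t)) ^ m * (t⁻¹ ^ k * exp (-(2 * t) * k ^ 2))) := by
        rw [exp_add, exp_add, exp_nat_mul]
        ring

theorem summable_alphOct_mul_choose_mul_exp (ht : 0 < t) :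
    Summable fun i : ℕ × ℕ =>
      alphOct i.2 i.1 * (2 * i.2 + 3 + (i.1 + 3)).choose i.2 * exp (-octEigenvalue i * t) := by
  have hm : Summable fun m : ℕ => exp (-(7 * t)) ^ m :=
    summable_geometric_of_lt_one (exp_pos _).le (exp_lt_one_iff.2 (by linarith))
  have hk := summable_pow_mul_exp_neg_mul_sq (inv_pos.2 ht) (mul_pos two_pos ht)
  refine .of_nonneg_of_le (fun i => ?_) (fun i => alphOct_mul_choose_mul_exp_le ht i.1 i.2)
    ((hm.mul_of_nonneg hk (fun m => by positivity) fun k => by positivity).mul_left _)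
  have := alphOct_nonneg i.2 i.1
  positivity

end OctonionicSpectrum

section OctonionicHeatKernel

variable {t : ℝ}

theorem isHeatExpansion_octonionic :
    IsHeatExpansion octEigenvalue
      (fun i r => alphOct i.2 i.1 * jacobiTrig i.1 3 (i.1 + 3) i.2 r) (fun i => hOct i.1)
      (fun i => alphOct i.2 i.1 * (2 * i.2 + 3 + (i.1 + 3)).choose i.2) (fun _ => hOctBound) where
  eigenvalue_nonneg := octEigenvalue_nonneg
  radial_bound i := by
    simpa only [norm_of_nonneg (alphOct_nonneg i.2 i.1)] using
      ((hasBernsteinBoundOn_jacobiTrig i.1 3 (i.1 + 3) i.2).const_mul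
        (alphOct i.2 i.1)).mono_exponent (Nat.cast_nonneg _)
          (fst_add_two_mul_snd_le_octEigenvalue i)
  angular_bound i :=
    (hasBernsteinBoundOn_hOct i.1).mono_exponent (Nat.cast_nonneg _) (fst_le_octEigenvalue i)
  summable_constants t ht := by
    simpa only [mul_right_comm] using (summable_alphOct_mul_choose_mul_exp ht).mul_right hOctBound

theorem pOct_mode_eq (t r η : ℝ) (i : ℕ × ℕ) :
    alphOct i.2 i.1 * hOct i.1 η * exp (-(4 * ((i.2 * (i.2 + i.1 + 7) + 2 * i.1 : ℕ) : ℝ)) * t) *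
        cos r ^ i.1 * (jacP i.2 (i.1 + 3)).eval (cos (2 * r))
      = exp (-octEigenvalue i * t) * (alphOct i.2 i.1 * jacobiTrig i.1 3 (i.1 + 3) i.2 r)
        * hOct i.1 η := by
  rw [jacP_eq_jacobi, octEigenvalue, jacobiTrig]
  ring

theorem pOct_eq_tsum (ht : 0 < t) (r η : ℝ) :
    pOct t r η = ∑' i : ℕ × ℕ,
      exp (-octEigenvalue i * t) * (alphOct i.2 i.1 * jacobiTrig i.1 3 (i.1 + 3) i.2 r)
        * hOct i.1 η := by
  rw [(isHeatExpansion_octonionic.summable ht r η).tsum_prod, pOct]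
  exact tsum_congr fun m => tsum_congr fun k => pOct_mode_eq t r η (m, k)

theorem contDiffOn_pOct :
    ContDiffOn ℝ ∞ (fun x : ℝ × ℝ × ℝ => pOct x.1 x.2.1 x.2.2) {x | 0 < x.1} :=
  isHeatExpansion_octonionic.contDiffOn.congr fun x hx => pOct_eq_tsum hx x.2.1 x.2.2

theorem pOct_heat_equation (ht : 0 < t) {r η : ℝ} (hs : sin r ≠ 0) (hc : cos r ≠ 0)
    (hη : sin η ≠ 0) :
    deriv (fun s => pOct s r η) t
      = deriv (deriv fun ρ => pOct t ρ η) r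
        + (7 * cot r - 7 * tan r) * deriv (fun ρ => pOct t ρ η) r
        + tan r ^ 2 * (deriv (deriv fun θ => pOct t r θ) η
          + 6 * cot η * deriv (fun θ => pOct t r θ) η) := by
  have hradial (i : ℕ × ℕ) :
      let g := fun ρ => alphOct i.2 i.1 * jacobiTrig i.1 3 (i.1 + 3) i.2 ρ
      deriv (deriv g) r + (7 * cot r - 7 * tan r) * deriv g r
        = (tan r ^ 2 * (i.1 * (i.1 + 6)) - octEigenvalue i) * g r := by
    intro g
    have hode := jacobiTrig_ode i.1 3 i.2 hs hc
    rw [deriv_const_mul_field', deriv_const_mul_field', octEigenvalue]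
    push_cast at hode ⊢
    linear_combination alphOct i.2 i.1 * hode
  have htime : (fun s => pOct s r η) =ᶠ[𝓝 t] _ :=
    (lt_mem_nhds ht).mono fun s hs => pOct_eq_tsum hs r η
  simp only [htime.deriv_eq, pOct_eq_tsum ht]
  exact isHeatExpansion_octonionic.heat_equation ht hradial fun i => hOct_gegenbauer_ode i.1 hη

end OctonionicHeatKernel

theorem pOct_converges_smooth_heat_general (t r η : ℝ) (ht : 0 < t) (hs : sin r ≠ 0)
    (hc : cos r ≠ 0) (hη : sin η ≠ 0) :
    Summable (fun mk : ℕ × ℕ =>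
        alphOct mk.2 mk.1 * hOct mk.1 η *
          exp (-(4 * ((mk.2 * (mk.2 + mk.1 + 7) + 2 * mk.1 : ℕ) : ℝ)) * t) *
          cos r ^ mk.1 * (jacP mk.2 (mk.1 + 3)).eval (cos (2 * r)))
      ∧ ContDiffOn ℝ ∞ (fun x : ℝ × ℝ × ℝ => pOct x.1 x.2.1 x.2.2) {x | 0 < x.1}
      ∧ deriv (fun s => pOct s r η) t
          = deriv (deriv fun ρ => pOct t ρ η) r
            + (7 * cot r - 7 * tan r) * deriv (fun ρ => pOct t ρ η) r
            + tan r ^ 2 * (deriv (deriv fun θ => pOct t r θ) η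
              + 6 * cot η * deriv (fun θ => pOct t r θ) η) := by
  simp only [pOct_mode_eq]
  exact ⟨isHeatExpansion_octonionic.summable ht r η, contDiffOn_pOct,
    pOct_heat_equation ht hs hc hη⟩

/-- For `t > 0`, `r ∈ (0,π/2)`, `η ∈ (0,π)`, the double series defining `p_t(r,η)` converges,
`p` is smooth in `(t,r,η)`, and `p` satisfies the heat equation of the radial part of the
sub-Laplacian of the octonionic Hopf fibration. -/
theorem pOct_converges_smooth_heat (t r η : ℝ) (ht : 0 < t)
    (hr : r ∈ Set.Ioo 0 (π / 2)) (hη : η ∈ Set.Ioo 0 π) :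
    Summable (fun mk : ℕ × ℕ =>
        alphOct mk.2 mk.1 * hOct mk.1 η *
          Real.exp (-(4 * ((mk.2 * (mk.2 + mk.1 + 7) + 2 * mk.1 : ℕ) : ℝ)) * t) *
          (Real.cos r) ^ mk.1 * (jacP mk.2 (mk.1 + 3)).eval (Real.cos (2 * r)))
      ∧ ContDiffOn ℝ (⊤ : ℕ∞) (fun x : ℝ × ℝ × ℝ => pOct x.1 x.2.1 x.2.2)
          (Set.Ioi 0 ×ˢ Set.Ioo 0 (π / 2) ×ˢ Set.Ioo 0 π)
      ∧ deriv (fun s => pOct s r η) t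
          = deriv (deriv (fun ρ => pOct t ρ η)) r
            + (7 * Real.cot r - 7 * Real.tan r) * deriv (fun ρ => pOct t ρ η) r
            + Real.tan r ^ 2 *
                (deriv (deriv (fun θ => pOct t r θ)) η
                  + 6 * Real.cot η * deriv (fun θ => pOct t r θ) η) := by
  obtain ⟨hsum, hsmooth, hheat⟩ := pOct_converges_smooth_heat_general t r η ht
    (sin_pos_of_pos_of_lt_pi hr.1 (by linarith [hr.2, pi_pos])).ne'
    (cos_pos_of_mem_Ioo ⟨by linarith [hr.1, pi_pos], hr.2⟩).ne'
    (sin_pos_of_pos_of_lt_pi hη.1 hη.2).ne'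
  exact ⟨hsum, hsmooth.mono fun x hx => hx.1, hheat⟩
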